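/- Let f, Δ : [-π,π] → ℝ be continuous functions with f(θ) > 0 for all θ ∈ [-π,π]. Then lim_{ε→0} δ_{a/g}(f, f+εΔ)/ε² = (1/2)·g_f(Δ), where g_f(Δ) := ∫ (Δ/f)² dμ − ( ∫ (Δ/f) dμ )²; that is, up to a scaling factor of 2 the quadratic term of the divergence δ_{a/g} between f and the perturbation f+Δ is the Riemannian pseudo-metric g_f(Δ). -/

import Mathlib

open MeasureTheory Real Filter Topology

/-- The normalized Lebesgue measure `dθ/(2π)` on `[-π, π]`. -/
noncomputable def μ : Measure ℝ :=
  (ENNReal.ofReal (2 * Real.pi)⁻¹) • (volume.restrict (Set.Icc (-Real.pi) Real.pi))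

/-- The arithmetic/geometric divergence between spectral densities. -/
noncomputable def δag (f₁ f₂ : ℝ → ℝ) : ℝ :=
  Real.log (∫ θ, f₁ θ / f₂ θ ∂μ) - ∫ θ, Real.log (f₁ θ / f₂ θ) ∂μ

/-- The Riemannian pseudo-metric at `f` applied to a perturbation `Δ`. -/
noncomputable def gf (f Δ : ℝ → ℝ) : ℝ :=
  (∫ θ, (Δ θ / f θ) ^ 2 ∂μ) - (∫ θ, Δ θ / f θ ∂μ) ^ 2

/-!
Put `g = f / (f + ε Δ) = (1 + ε u)⁻¹` with `u = Δ / f`. Then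
`δag f (f + ε Δ) = log (∫ g) - ∫ log g` is the gap in Jensen's inequality for `-log`.
If `ψ` has a second order expansion at `x₀` with quadratic coefficient `c`, affine terms cancel in
`∫ ψ(Y) - ψ(∫ Y)`, so for `Y = x₀ + ε v + o(ε)` with `Y - x₀` uniformly `O(ε)`, dominated
convergence makes this gap `ε² c (∫ v² - (∫ v)²) + o(ε²)`.
Here `ψ = -log`, `x₀ = 1`, `c = 1 / 2` and `v = -u`.
-/

section JensenGap

variable {ι Ω : Type*} {mΩ : MeasurableSpace Ω} {ν : Measure Ω} {l : Filter ι} {s : ι → ℝ}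
  {X Y : ι → Ω → ℝ} {v : Ω → ℝ} {φ ψ : ℝ → ℝ} {C a b c x₀ : ℝ} {n : ℕ}

lemma tendsto_comp_div_pow {z : ι → ℝ} {w : ℝ}
    (hφ : (fun y => φ y - c * y ^ n) =o[𝓝 0] fun y => y ^ n) (hs : Tendsto s l (𝓝[≠] 0))
    (hz : Tendsto (fun i => z i / s i) l (𝓝 w)) :
    Tendsto (fun i => φ (z i) / s i ^ n) l (𝓝 (c * w ^ n)) := by
  obtain ⟨hs0, hs_ne⟩ := tendsto_nhdsWithin_iff.mp hs
  have hzO : z =O[l] s :=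
    Asymptotics.isBigO_of_div_tendsto_nhds (hs_ne.mono fun i hi h => absurd h hi) w hz
  have hrem : Tendsto (fun i => (φ (z i) - c * z i ^ n) / s i ^ n) l (𝓝 0) :=
    ((hφ.comp_tendsto (hzO.trans_tendsto hs0)).trans_isBigO (hzO.pow n)).tendsto_div_nhds_zero
  have hsum := hrem.add ((hz.pow n).const_mul c)
  rw [zero_add] at hsum
  exact hsum.congr fun i => by rw [div_pow]; ring

lemma exists_eventually_ae_abs_comp_le (hφ : φ =O[𝓝 0] fun y => y ^ n) (hs : Tendsto s l (𝓝 0))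
    (hX : ∀ᶠ i in l, ∀ᵐ ω ∂ν, |X i ω| ≤ C * |s i|) :
    ∃ K, ∀ᶠ i in l, ∀ᵐ ω ∂ν, |φ (X i ω)| ≤ K * |s i| ^ n := by
  obtain ⟨K, hK, hφK⟩ := hφ.exists_pos
  obtain ⟨r, hr, hφr⟩ := Metric.eventually_nhds_iff.mp hφK.bound
  have hCs : Tendsto (fun i => C * |s i|) l (𝓝 0) := by simpa using hs.abs.const_mul C
  refine ⟨K * C ^ n, ?_⟩
  filter_upwards [hX, hCs.eventually_lt_const hr] with i hXi hi
  filter_upwards [hXi] with ω hω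
  calc |φ (X i ω)| ≤ K * |X i ω| ^ n := by
        simpa using hφr (show dist (X i ω) 0 < r by simpa using hω.trans_lt hi)
    _ ≤ K * (C * |s i|) ^ n := by gcongr
    _ = K * C ^ n * |s i| ^ n := by ring

lemma eventually_integrable_comp [IsFiniteMeasure ν] (hφm : Measurable φ)
    (hφ : φ =O[𝓝 0] fun y => y ^ n) (hs : Tendsto s l (𝓝 0))
    (hXm : ∀ᶠ i in l, AEMeasurable (X i) ν)
    (hX : ∀ᶠ i in l, ∀ᵐ ω ∂ν, |X i ω| ≤ C * |s i|) :
    ∀ᶠ i in l, Integrable (fun ω => φ (X i ω)) ν := by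
  obtain ⟨K, hK⟩ := exists_eventually_ae_abs_comp_le hφ hs hX
  filter_upwards [hXm, hK] with i hXmi hKi
  exact .of_bound (hφm.comp_aemeasurable hXmi).aestronglyMeasurable _ hKi

lemma isBigO_pow_of_isLittleO_sub (hφ : (fun y => φ y - c * y ^ n) =o[𝓝 0] fun y => y ^ n) :
    φ =O[𝓝 0] fun y => y ^ n := by
  simpa using hφ.isBigO.add (Asymptotics.isBigO_const_mul_self c (fun y : ℝ => y ^ n) (𝓝 0))

lemma tendsto_integral_comp_div_pow [IsFiniteMeasure ν] [l.IsCountablyGenerated]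
    (hφm : Measurable φ) (hφ : (fun y => φ y - c * y ^ n) =o[𝓝 0] fun y => y ^ n)
    (hs : Tendsto s l (𝓝[≠] 0)) (hXm : ∀ᶠ i in l, AEMeasurable (X i) ν)
    (hX : ∀ᶠ i in l, ∀ᵐ ω ∂ν, |X i ω| ≤ C * |s i|)
    (hXv : ∀ᵐ ω ∂ν, Tendsto (fun i => X i ω / s i) l (𝓝 (v ω))) :
    Tendsto (fun i => (∫ ω, φ (X i ω) ∂ν) / s i ^ n) l (𝓝 (c * ∫ ω, v ω ^ n ∂ν)) := by
  obtain ⟨hs0, hs_ne⟩ := tendsto_nhdsWithin_iff.mp hs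
  obtain ⟨K, hK⟩ := exists_eventually_ae_abs_comp_le (isBigO_pow_of_isLittleO_sub hφ) hs0 hX
  simp only [← integral_div, ← integral_const_mul]
  refine tendsto_integral_filter_of_dominated_convergence (fun _ => K) ?_ ?_
    (integrable_const K) (hXv.mono fun ω hω => tendsto_comp_div_pow hφ hs hω)
  · filter_upwards [hXm] with i hXmi
    exact ((hφm.comp_aemeasurable hXmi).div_const _).aestronglyMeasurable
  · filter_upwards [hK, hs_ne] with i hKi hsi
    filter_upwards [hKi] with ω hω
    rw [Real.norm_eq_abs, abs_div, abs_pow, div_le_iff₀ (pow_pos (abs_pos.mpr hsi) n)]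
    exact hω

lemma tendsto_integral_comp_sub_comp_integral_div_sq [IsFiniteMeasure ν]
    [l.IsCountablyGenerated] (hφm : Measurable φ)
    (hφ : (fun y => φ y - c * y ^ 2) =o[𝓝 0] fun y => y ^ 2)
    (hs : Tendsto s l (𝓝[≠] 0)) (hXm : ∀ᶠ i in l, AEMeasurable (X i) ν)
    (hX : ∀ᶠ i in l, ∀ᵐ ω ∂ν, |X i ω| ≤ C * |s i|)
    (hXv : ∀ᵐ ω ∂ν, Tendsto (fun i => X i ω / s i) l (𝓝 (v ω))) :
    Tendsto (fun i => ((∫ ω, φ (X i ω) ∂ν) - φ (∫ ω, X i ω ∂ν)) / s i ^ 2) l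
      (𝓝 (c * ((∫ ω, v ω ^ 2 ∂ν) - (∫ ω, v ω ∂ν) ^ 2))) := by
  have hmean : Tendsto (fun i => (∫ ω, X i ω ∂ν) / s i) l (𝓝 (∫ ω, v ω ∂ν)) := by
    simpa using tendsto_integral_comp_div_pow (φ := id) (c := 1) (n := 1) measurable_id
      (by simp) hs hXm hX hXv
  simpa only [sub_div, mul_sub] using
    (tendsto_integral_comp_div_pow hφm hφ hs hXm hX hXv).sub (tendsto_comp_div_pow hφ hs hmean)

lemma jensen_gap_sub_affine [IsProbabilityMeasure ν] {Z : Ω → ℝ} (hZ : Integrable Z ν)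
    (hψ : Integrable (fun ω => ψ (Z ω)) ν) (a b x₀ : ℝ) :
    (∫ ω, (ψ (Z ω) - (a + b * (Z ω - x₀))) ∂ν) -
        (ψ (∫ ω, Z ω ∂ν) - (a + b * ((∫ ω, Z ω ∂ν) - x₀))) =
      (∫ ω, ψ (Z ω) ∂ν) - ψ (∫ ω, Z ω ∂ν) := by
  have hlin : Integrable (fun ω => b * (Z ω - x₀)) ν :=
    (hZ.sub (integrable_const x₀)).const_mul b
  have haffine_int : Integrable (fun ω => a + b * (Z ω - x₀)) ν := (integrable_const a).add hlin
  have haffine : ∫ ω, (a + b * (Z ω - x₀)) ∂ν = a + b * ((∫ ω, Z ω ∂ν) - x₀) := by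
    simp [integral_add (integrable_const a) hlin, integral_const_mul,
      integral_sub hZ (integrable_const x₀)]
  rw [integral_sub hψ haffine_int, haffine]
  ring

theorem tendsto_jensen_gap_div_sq [IsProbabilityMeasure ν] [l.IsCountablyGenerated]
    (hψm : Measurable ψ)
    (hψ : (fun x => ψ x - (a + b * (x - x₀) + c * (x - x₀) ^ 2)) =o[𝓝 x₀] fun x => (x - x₀) ^ 2)
    (hs : Tendsto s l (𝓝[≠] 0)) (hYm : ∀ᶠ i in l, AEMeasurable (Y i) ν)
    (hY : ∀ᶠ i in l, ∀ᵐ ω ∂ν, |Y i ω - x₀| ≤ C * |s i|)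
    (hYv : ∀ᵐ ω ∂ν, Tendsto (fun i => (Y i ω - x₀) / s i) l (𝓝 (v ω))) :
    Tendsto (fun i => ((∫ ω, ψ (Y i ω) ∂ν) - ψ (∫ ω, Y i ω ∂ν)) / s i ^ 2) l
      (𝓝 (c * ((∫ ω, v ω ^ 2 ∂ν) - (∫ ω, v ω ∂ν) ^ 2))) := by
  let φ : ℝ → ℝ := fun y => ψ (x₀ + y) - (a + b * y)
  have hφm : Measurable φ := by fun_prop
  have hφ : (fun y => φ y - c * y ^ 2) =o[𝓝 0] fun y => y ^ 2 := by
    have hshift : Tendsto (fun y => x₀ + y) (𝓝 0) (𝓝 x₀) := by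
      simpa using (continuous_const_add x₀).tendsto 0
    refine (hψ.comp_tendsto hshift).congr (fun y => ?_) fun y => ?_ <;>
      simp only [φ, Function.comp_apply, add_sub_cancel_left]
    ring
  have hXm : ∀ᶠ i in l, AEMeasurable (fun ω => Y i ω - x₀) ν :=
    hYm.mono fun i hi => hi.sub_const x₀
  have hs0 : Tendsto s l (𝓝 0) := hs.mono_right nhdsWithin_le_nhds
  refine (tendsto_integral_comp_sub_comp_integral_div_sq hφm hφ hs hXm hY hYv).congr' ?_
  filter_upwards [eventually_integrable_comp hφm (isBigO_pow_of_isLittleO_sub hφ) hs0 hXm hY,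
    eventually_integrable_comp (φ := fun y => y) (n := 1) measurable_id
      (by simpa using Asymptotics.isBigO_refl (fun y : ℝ => y) (𝓝 0)) hs0 hXm hY] with i hφi hXi
  have hYi : Integrable (Y i) ν :=
    (hXi.add (integrable_const x₀)).congr (.of_forall fun ω => by simp)
  have hψi : Integrable (fun ω => ψ (Y i ω)) ν :=
    (hφi.add ((integrable_const a).add (hXi.const_mul b))).congr (.of_forall fun ω => by simp [φ])
  have hmean : ∫ ω, (Y i ω - x₀) ∂ν = (∫ ω, Y i ω ∂ν) - x₀ := by
    simp [integral_sub hYi (integrable_const x₀)]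
  rw [← jensen_gap_sub_affine hYi hψi a b x₀, hmean]
  simp only [φ, add_sub_cancel]

end JensenGap

lemma isLittleO_log_sub_quadratic :
    (fun x => log x - ((x - 1) - (x - 1) ^ 2 / 2)) =o[𝓝 1] fun x => (x - 1) ^ 2 := by
  have hsub : Tendsto (fun x : ℝ => x - 1) (𝓝 1) (𝓝 0) := by
    simpa using (continuous_sub_right (1 : ℝ)).tendsto 1
  have hcubic : (fun x => log x - ((x - 1) - (x - 1) ^ 2 / 2)) =O[𝓝 1] fun x => (x - 1) ^ 3 := by
    refine .of_bound 2 ?_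
    filter_upwards [hsub.abs.eventually_le_const (show |(0 : ℝ)| < 1 / 2 by norm_num)] with x hx
    have hlog := abs_log_sub_add_sum_range_le (x := 1 - x) (by rw [abs_sub_comm]; linarith) 2
    rw [abs_sub_comm 1 x] at hlog
    calc ‖log x - ((x - 1) - (x - 1) ^ 2 / 2)‖
        = |(∑ i ∈ Finset.range 2, (1 - x) ^ (i + 1) / (i + 1)) + log (1 - (1 - x))| := by
          rw [Real.norm_eq_abs, Finset.sum_range_succ, Finset.sum_range_one, sub_sub_cancel]
          congr 1
          push_cast
          ring
      _ ≤ |x - 1| ^ 3 / (1 - |x - 1|) := hlog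
      _ ≤ |x - 1| ^ 3 / (1 / 2) := by gcongr; linarith
      _ = 2 * ‖(x - 1) ^ 3‖ := by rw [norm_pow, Real.norm_eq_abs]; ring
  exact hcubic.trans_isLittleO
    ((Asymptotics.isLittleO_pow_pow (show 2 < 3 by norm_num)).comp_tendsto hsub)

lemma abs_inv_one_add_sub_one_le {x : ℝ} (hx : |x| ≤ 1 / 2) : |(1 + x)⁻¹ - 1| ≤ 2 * |x| := by
  have hpos : 1 / 2 ≤ 1 + x := by linarith [(abs_le.mp hx).1]
  have hdiff : (1 + x)⁻¹ - 1 = -x / (1 + x) := by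
    field_simp [show 1 + x ≠ 0 by linarith]
    ring
  rw [hdiff, abs_div, abs_neg, abs_of_pos (by linarith : 0 < 1 + x), div_le_iff₀ (by linarith)]
  nlinarith [abs_nonneg x]

lemma tendsto_inv_one_add_mul_sub_one_div (w : ℝ) :
    Tendsto (fun ε : ℝ => ((1 + ε * w)⁻¹ - 1) / ε) (𝓝[≠] 0) (𝓝 (-w)) := by
  have hderiv : HasDerivAt (fun ε : ℝ => (1 + ε * w)⁻¹) (-w) 0 := by
    simpa using (((hasDerivAt_id (0 : ℝ)).mul_const w).const_add 1).fun_inv (by simp)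
  simpa [div_eq_inv_mul] using hderiv.tendsto_slope_zero

theorem tendsto_log_integral_sub_integral_log_inv_one_add_div_sq {Ω : Type*}
    {mΩ : MeasurableSpace Ω} {ν : Measure Ω} [IsProbabilityMeasure ν] {u : Ω → ℝ}
    (hu : MemLp u ⊤ ν) :
    Tendsto (fun ε : ℝ => (log (∫ ω, (1 + ε * u ω)⁻¹ ∂ν) - ∫ ω, log (1 + ε * u ω)⁻¹ ∂ν) / ε ^ 2)
      (𝓝[≠] 0) (𝓝 (1 / 2 * ((∫ ω, u ω ^ 2 ∂ν) - (∫ ω, u ω ∂ν) ^ 2))) := by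
  obtain ⟨M, hM⟩ : ∃ M, ∀ᵐ ω ∂ν, |u ω| ≤ M := ⟨_, ae_le_lpNorm_exponent_top hu⟩
  have hsmall : ∀ᶠ ε : ℝ in 𝓝[≠] 0, |ε| * M ≤ 1 / 2 := by
    have hcont : Tendsto (fun ε : ℝ => |ε| * M) (𝓝 0) (𝓝 (|0| * M)) :=
      (continuous_abs.mul continuous_const).tendsto 0
    exact (hcont.mono_left nhdsWithin_le_nhds).eventually_le_const (by norm_num)
  have hbound : ∀ᶠ ε : ℝ in 𝓝[≠] 0, ∀ᵐ ω ∂ν, |(1 + ε * u ω)⁻¹ - 1| ≤ 2 * M * |ε| := by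
    filter_upwards [hsmall] with ε hε
    filter_upwards [hM] with ω hω
    have hεu : |ε * u ω| ≤ |ε| * M := by rw [abs_mul]; gcongr
    linarith [abs_inv_one_add_sub_one_le (hεu.trans hε)]
  have hgap := tendsto_jensen_gap_div_sq (s := fun ε => ε) (Y := fun ε ω => (1 + ε * u ω)⁻¹)
    (a := 0) (b := 1) (c := -(1 / 2)) measurable_log
    (isLittleO_log_sub_quadratic.congr_left fun x => by ring) tendsto_id
    (.of_forall fun ε => ((hu.aemeasurable.const_mul ε).const_add 1).inv)
    hbound (.of_forall fun ω => tendsto_inv_one_add_mul_sub_one_div (u ω))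
  convert hgap.neg using 2
  · ring
  · simp only [neg_sq, integral_neg]
    ring

instance isProbabilityMeasure_μ : IsProbabilityMeasure μ where
  measure_univ := by
    have := pi_pos
    simp only [μ, Measure.smul_apply, Measure.restrict_apply_univ, volume_Icc, smul_eq_mul]
    rw [← ENNReal.ofReal_mul (by positivity), ← ENNReal.ofReal_one]
    congr 1
    field_simp
    ring

lemma ae_μ_mem_Icc : ∀ᵐ θ ∂μ, θ ∈ Set.Icc (-π) π :=
  Measure.ae_smul_measure (ae_restrict_mem measurableSet_Icc) _

lemma memLp_top_μ_of_continuousOn {u : ℝ → ℝ} (hu : ContinuousOn u (Set.Icc (-π) π)) :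
    MemLp u ⊤ μ := by
  obtain ⟨M, hM⟩ := isCompact_Icc.exists_bound_of_continuousOn hu
  exact memLp_top_of_bound ((hu.aestronglyMeasurable measurableSet_Icc).smul_measure _) M
    (ae_μ_mem_Icc.mono hM)

lemma δag_add_mul {f : ℝ → ℝ} (hf : ∀ᵐ θ ∂μ, f θ ≠ 0) (Δ : ℝ → ℝ) (ε : ℝ) :
    δag f (fun θ => f θ + ε * Δ θ) =
      log (∫ θ, (1 + ε * (Δ θ / f θ))⁻¹ ∂μ) - ∫ θ, log (1 + ε * (Δ θ / f θ))⁻¹ ∂μ := by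
  have hratio : ∀ᵐ θ ∂μ, f θ / (f θ + ε * Δ θ) = (1 + ε * (Δ θ / f θ))⁻¹ := by
    filter_upwards [hf] with θ hθ
    rw [← inv_div, add_div, div_self hθ, mul_div_assoc]
  rw [δag, integral_congr_ae hratio, integral_congr_ae (hratio.mono fun θ hθ => congrArg log hθ)]

theorem δag_quadratic_term_general (f Δ : ℝ → ℝ) (hf : ∀ᵐ θ ∂μ, f θ ≠ 0)
    (hu : MemLp (fun θ => Δ θ / f θ) ⊤ μ) :
    Tendsto (fun ε : ℝ => δag f (fun θ => f θ + ε * Δ θ) / ε ^ 2)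
      (𝓝[≠] 0) (𝓝 ((1 / 2) * gf f Δ)) := by
  simp only [δag_add_mul hf, gf]
  exact tendsto_log_integral_sub_integral_log_inv_one_add_div_sq hu

theorem δag_quadratic_term (f Δ : ℝ → ℝ)
    (hf : Continuous f) (hΔ : Continuous Δ)
    (hfpos : ∀ θ ∈ Set.Icc (-Real.pi) Real.pi, 0 < f θ) :
    Tendsto (fun ε : ℝ => δag f (fun θ => f θ + ε * Δ θ) / ε ^ 2)
      (𝓝[≠] 0) (𝓝 ((1 / 2) * gf f Δ)) :=
  δag_quadratic_term_general f Δ (ae_μ_mem_Icc.mono fun θ hθ => (hfpos θ hθ).ne')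
    (memLp_top_μ_of_continuousOn
      (hΔ.continuousOn.div hf.continuousOn fun θ hθ => (hfpos θ hθ).ne'))
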